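/- Let G be a finite tree (a finite connected acyclic simple graph) with a distinguished root vertex r. If v_1 and v_2 are branching vertices of (G, r) such that the level of v_1 is less than or equal to the level of every branching vertex and the level of v_2 is less than or equal to the level of every branching vertex, then v_1 = v_2. Consequently, if the set of branching vertices is nonempty, there is a unique branching vertex (the first branching vertex) whose level is strictly less than the levels of all other branching vertices. -/

import Mathlib

/-- A vertex `v` of a rooted graph `(G, r)` is *branching* if it has at least two
children, i.e. at least two distinct neighbors whose distance to the root `r` is
`dist r v + 1`. -/
def SimpleGraph.IsBranching {V : Type*} (G : SimpleGraph V) (r v : V) : Prop :=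
  ∃ w₁ w₂ : V, w₁ ≠ w₂ ∧ G.Adj v w₁ ∧ G.Adj v w₂ ∧
    G.dist r w₁ = G.dist r v + 1 ∧ G.dist r w₂ = G.dist r v + 1

/-!
As long as no vertex at distance `< n` from the root is branching, there is only one vertex at
distance `n`: by induction there is a single vertex `u` at distance `n - 1`, every vertex at
distance `n` is a child of `u`, and two of them would make `u` branching. Hence two branching
vertices of least level, having equal levels, coincide.
-/

section

variable {V : Type*} {G : SimpleGraph V} {r : V}

theorem exists_adj_dist_eq_of_dist_eq_add_one {w : V} {n : ℕ} (hw : G.dist r w = n + 1) :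
    ∃ u, G.Adj u w ∧ G.dist r u = n := by
  obtain ⟨p, hp⟩ := SimpleGraph.exists_walk_of_dist_ne_zero (hw.trans_ne n.succ_ne_zero)
  have hnil : ¬p.Nil := by
    rw [← SimpleGraph.Walk.length_eq_zero_iff]
    omega
  have hadj : G.Adj p.penultimate w := p.adj_penultimate hnil
  have hle : G.dist r p.penultimate ≤ p.length - 1 := by
    simpa using SimpleGraph.dist_le p.dropLast
  have hstep := hadj.diff_dist_adj (u := r)
  exact ⟨p.penultimate, hadj, by omega⟩

theorem subsingleton_setOf_dist_eq (hG : G.Connected) {n : ℕ}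
    (hn : ∀ v, G.IsBranching r v → n ≤ G.dist r v) : {v | G.dist r v = n}.Subsingleton := by
  induction n with
  | zero =>
    intro a ha b hb
    exact (hG.dist_eq_zero_iff.mp ha).symm.trans (hG.dist_eq_zero_iff.mp hb)
  | succ n ih =>
    have hsub : {v | G.dist r v = n}.Subsingleton := ih fun v hv => n.le_succ.trans (hn v hv)
    intro a ha b hb
    obtain ⟨u, hua, hu⟩ := exists_adj_dist_eq_of_dist_eq_add_one ha
    obtain ⟨v, hvb, hv⟩ := exists_adj_dist_eq_of_dist_eq_add_one hb
    obtain rfl : u = v := hsub hu hv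
    by_contra hab
    have hbranch : G.IsBranching r u :=
      ⟨a, b, hab, hua, hvb, hu.symm ▸ ha, hu.symm ▸ hb⟩
    have hle : n + 1 ≤ G.dist r u := hn u hbranch
    exact n.lt_irrefl (hu ▸ hle)

theorem dist_lt_dist_of_isBranching_of_ne (hG : G.Connected) {v w : V}
    (hmin : ∀ x, G.IsBranching r x → G.dist r v ≤ G.dist r x)
    (hw : G.IsBranching r w) (hne : w ≠ v) : G.dist r v < G.dist r w :=
  (hmin w hw).lt_of_ne fun heq => hne (subsingleton_setOf_dist_eq hG hmin heq.symm rfl)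

end

theorem first_branching_vertex_unique_general {V : Type*} {G : SimpleGraph V}
    (hG : G.Connected) (r : V) :
    (∀ v₁ v₂, G.IsBranching r v₁ → G.IsBranching r v₂ →
      (∀ v, G.IsBranching r v → G.dist r v₁ ≤ G.dist r v) →
      (∀ v, G.IsBranching r v → G.dist r v₂ ≤ G.dist r v) → v₁ = v₂) ∧
      ((∃ v, G.IsBranching r v) →
        ∃! v, G.IsBranching r v ∧
          ∀ w, G.IsBranching r w → w ≠ v → G.dist r v < G.dist r w) := by
  constructor
  · intro v₁ v₂ h₁ h₂ hmin₁ hmin₂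
    by_contra hne
    exact (dist_lt_dist_of_isBranching_of_ne hG hmin₂ h₁ hne).not_ge (hmin₁ v₂ h₂)
  · intro h
    obtain ⟨v, hv⟩ := exists_minimalFor_of_wellFoundedLT (G.IsBranching r) (G.dist r) h
    have hmin : ∀ w, G.IsBranching r w → G.dist r v ≤ G.dist r w :=
      fun w hw => not_lt.mp (hv.not_lt hw)
    refine ⟨v, ⟨hv.prop, fun w hw hne => dist_lt_dist_of_isBranching_of_ne hG hmin hw hne⟩, ?_⟩
    rintro w ⟨hw, hlt⟩
    by_contra hne
    exact (hlt v hv.prop (Ne.symm hne)).not_ge (hmin w hw)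

/-- In a finite rooted tree `(G, r)`, if `v₁` and `v₂` are branching
vertices whose level (= distance to the root plus one) is minimal among all branching
vertices, then `v₁ = v₂`.  Consequently, if a branching vertex exists, then there is a
unique branching vertex whose level is strictly less than the levels of all other
branching vertices. -/
theorem first_branching_vertex_unique {V : Type*} [Fintype V] (G : SimpleGraph V)
    (hG : G.IsTree) (r v₁ v₂ : V)
    (h₁ : G.IsBranching r v₁) (h₂ : G.IsBranching r v₂)
    (hmin₁ : ∀ v, G.IsBranching r v → G.dist r v₁ ≤ G.dist r v)
    (hmin₂ : ∀ v, G.IsBranching r v → G.dist r v₂ ≤ G.dist r v) :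
    v₁ = v₂ ∧
      ((∃ v, G.IsBranching r v) →
        ∃! v, G.IsBranching r v ∧
          ∀ w, G.IsBranching r w → w ≠ v → G.dist r v < G.dist r w) :=
  (first_branching_vertex_unique_general hG.connected r).imp
    (fun h => h v₁ v₂ h₁ h₂ hmin₁ hmin₂) id
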